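/- Let n ≥ 1, s ∈ (0,1), and let Ω ⊂ ℝⁿ be a bounded C² domain that is strictly star-shaped with respect to the origin. Let u ∈ C²(Ω) ∩ C¹(cl Ω) ∩ C^{0,1}(ℝⁿ) with u = 0 in Ωᶜ satisfy condition (★). Then ∫_Ω (x·∇u(x)) (−Δ)ˢu(x) dx = ((2s−n)/2) ∫_Ω u(x)(−Δ)ˢu(x) dx = ((2s−n)/2) [u]_s². -/

import Mathlib

open MeasureTheory Real Set Metric Bornology Filter
open scoped RealInnerProductSpace ENNReal NNReal Pointwise

noncomputable section

abbrev En (n : ℕ) : Type := EuclideanSpace ℝ (Fin n)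

/-- The normalizing constant `c_{n,s}`. -/
def cK (n : ℕ) (s : ℝ) : ℝ :=
  s * (2 : ℝ) ^ (2 * s) * Real.Gamma (((n : ℝ) + 2 * s) / 2) /
    (Real.pi ^ ((n : ℝ) / 2) * Real.Gamma (1 - s))

/-- The fractional Laplacian `(-Δ)ˢ u (x)`. -/
def fracLap (n : ℕ) (s : ℝ) (u : En n → ℝ) (x : En n) : ℝ :=
  (cK n s / 2) * ∫ y : En n, (2 * u x - u (x + y) - u (x - y)) / ‖y‖ ^ ((n : ℝ) + 2 * s)

/-- `(-Δ)^{s/2} u (x)`, defined via the non-symmetrized integral. -/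
def fracHalf (n : ℕ) (s : ℝ) (u : En n → ℝ) (x : En n) : ℝ :=
  cK n (s / 2) * ∫ z : En n, (u x - u (x + z)) / ‖z‖ ^ ((n : ℝ) + s)

/-- The squared Gagliardo-type seminorm `[u]_s²`. -/
def seminormSsq (n : ℕ) (s : ℝ) (u : En n → ℝ) : ℝ :=
  (cK n s / 2) * ∫ p : En n × En n, (u p.1 - u p.2) ^ 2 / ‖p.1 - p.2‖ ^ ((n : ℝ) + 2 * s)

/-- The squared seminorm `[u]₁² = ∫_Ω |∇u|²`. -/
def seminorm1sq (n : ℕ) (Ω : Set (En n)) (u : En n → ℝ) : ℝ :=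
  ∫ x in Ω, ‖gradient u x‖ ^ 2

/-- The Laplacian as the trace of the Hessian. -/
def lap (n : ℕ) (u : En n → ℝ) (x : En n) : ℝ :=
  ∑ i : Fin n, fderiv ℝ (fun y => fderiv ℝ u y (EuclideanSpace.single i 1)) x
    (EuclideanSpace.single i 1)

/-- The Hessian `D²u(x)` as a continuous bilinear-type map; `‖hess n u x‖` is its operator
norm. -/
def hess (n : ℕ) (u : En n → ℝ) (x : En n) : En n →L[ℝ] En n →L[ℝ] ℝ :=
  fderiv ℝ (fderiv ℝ u) x

/-- A bounded C² domain `Ω ⊆ ℝⁿ`: a bounded open connected set whose boundary is a C²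
hypersurface, described by a global C² defining function with nonvanishing gradient
on the boundary. -/
structure C2Domain (n : ℕ) where
  carrier : Set (En n)
  phi : En n → ℝ
  phi_smooth : ContDiff ℝ 2 phi
  carrier_eq : carrier = {x | phi x < 0}
  grad_ne : ∀ x ∈ frontier carrier, gradient phi x ≠ 0
  bounded : IsBounded carrier
  connected : IsConnected carrier

/-- The outward unit normal `ν` on `∂Ω`. -/
def C2Domain.nu {n : ℕ} (D : C2Domain n) (x : En n) : En n :=
  ‖gradient D.phi x‖⁻¹ • gradient D.phi x

/-- The normal derivative `∂u/∂ν` at a boundary point (the derivative from inside). -/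
def normalDeriv {n : ℕ} (D : C2Domain n) (u : En n → ℝ) (x : En n) : ℝ :=
  fderivWithin ℝ u (closure D.carrier) x (D.nu x)

/-- `Ω` is strictly star-shaped with respect to `z₀`. -/
def C2Domain.StrictlyStarShapedAt {n : ℕ} (D : C2Domain n) (z₀ : En n) : Prop :=
  z₀ ∈ D.carrier ∧ ∀ x ∈ frontier D.carrier, 0 < ⟪x - z₀, D.nu x⟫

/-- `Ω` is strictly star-shaped. -/
def C2Domain.StrictlyStarShaped {n : ℕ} (D : C2Domain n) : Prop :=
  ∃ z₀, D.StrictlyStarShapedAt z₀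

/-- The Pohozaev boundary term `∫_{∂Ω} (∂u/∂ν)² (x·ν(x)) dS`, with `dS` the
`(n-1)`-dimensional Hausdorff measure on `∂Ω`. -/
def pohozaevBoundary {n : ℕ} (D : C2Domain n) (u : En n → ℝ) : ℝ :=
  ∫ x in frontier D.carrier, (normalDeriv D u x) ^ 2 * ⟪x, D.nu x⟫ ∂ μH[(n : ℝ) - 1]

/-- Condition (★). -/
def StarCond (n : ℕ) (s : ℝ) (Ω : Set (En n)) (u : En n → ℝ) : Prop :=
  ∃ C > 0, ∃ γ ∈ Set.Ioo (0:ℝ) 1, ∀ x ∈ Ω,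
    ‖hess n u x‖ ≤ C * infDist x (frontier Ω) ^ (γ - 1) ∧
    |u x| ≤ C * infDist x (frontier Ω) ∧
    |fracLap n s u x| ≤ C * (1 + (if s < 1/2 then 1 else 0)
      + (if s = 1/2 then |Real.log (infDist x (frontier Ω))| else 0)
      + (if 1/2 < s then infDist x (frontier Ω) ^ (1 - 2*s) else 0))

/-!
Put `u_λ(x) = u(λx)`. By symmetry, `∫ u_λ (-Δ)ˢu` is the Gagliardo bilinear form `Q(u_λ, u)`.
Scaling both arguments by `λ⁻¹` turns `Q(u_λ, u)` into `λ^(2s-n) Q(u, u_{1/λ})`, so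
`I(λ) = ∫ u_λ (-Δ)ˢu` satisfies `I(λ) = λ^(2s-n) I(1/λ)`. Differentiating at `λ = 1` gives
`2 ∫ (x·∇u) (-Δ)ˢu = (2s-n) Q(u, u)`.

The exchange of integrals needs absolute convergence up to the boundary. Interpolating between the
Hessian bound `A / d`, `d = dist(·, ∂Ω)`, and the Lipschitz bound estimates the second difference of
`u` with increment `y` by a multiple of `d ^ (-β) |y| ^ (1 + β)` for every `β ∈ [0, 1]`. With
`2s - 1 < β < 1` the kernel is integrable in `y` near `0`, and `d ^ (-β)` is locally integrable:
near a boundary point, `d` restricted to a segment in a fixed transversal direction grows at least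
linearly away from its minimum point.
-/

open scoped Topology

section GagliardoForm

variable {E : Type*} [NormedAddCommGroup E] [MeasurableSpace E]

/-- The symmetric second difference of `u` at `x` with increment `y`, the numerator of the kernel
of the fractional Laplacian. -/
def secondDiff (u : E → ℝ) (x y : E) : ℝ :=
  2 * u x - u (x + y) - u (x - y)

/-- The fractional Laplacian without its normalizing constant. The exponent `α` of the kernel is
`n + 2s` for `(-Δ)ˢ` on `ℝⁿ`. -/
def fracLapIntegral (μ : Measure E) (α : ℝ) (u : E → ℝ) (x : E) : ℝ :=
  ∫ y, secondDiff u x y / ‖y‖ ^ α ∂μ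

/-- The bilinear form `∬ (v x' - v x) (w x' - w x) / ‖x' - x‖ ^ α` of the Gagliardo seminorm,
written in the variables `x` and `y = x' - x`. -/
def gagliardoForm (μ : Measure E) (α : ℝ) (v w : E → ℝ) : ℝ :=
  ∫ y, (∫ x, (v (x + y) - v x) * (w (x + y) - w x) ∂μ) / ‖y‖ ^ α ∂μ

/-- The kernel of the fractional Laplacian of `u`, as a function of the base point and the
increment, is integrable over `k × E` for every compact `k`. This is what testing the fractional
Laplacian of `u` against compactly supported functions requires. -/
def SecondDiffLocIntegrable (μ : Measure E) (α : ℝ) (u : E → ℝ) : Prop :=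
  ∀ k : Set E, IsCompact k →
    Integrable (fun p : E × E => secondDiff u p.1 p.2 / ‖p.2‖ ^ α) ((μ.restrict k).prod μ)

variable {μ : Measure E} {α : ℝ} {u v w : E → ℝ}

theorem gagliardoForm_comm (μ : Measure E) (α : ℝ) (v w : E → ℝ) :
    gagliardoForm μ α v w = gagliardoForm μ α w v := by
  simp only [gagliardoForm, mul_comm]

variable [μ.IsAddHaarMeasure]

theorem integral_mul_secondDiff [BorelSpace E] (hv : Continuous v) (hvc : HasCompactSupport v)
    (hu : Continuous u) (y : E) :
    ∫ x, v x * secondDiff u x y ∂μ = ∫ x, (v (x + y) - v x) * (u (x + y) - u x) ∂μ := by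
  have hplus : Integrable (fun x => v x * (u x - u (x + y))) μ :=
    Continuous.integrable_of_hasCompactSupport (by fun_prop) hvc.mul_right
  have hminus : Integrable (fun x => v x * (u x - u (x - y))) μ :=
    Continuous.integrable_of_hasCompactSupport (by fun_prop) hvc.mul_right
  have hshift : Integrable (fun x => v (x + y) * (u (x + y) - u x)) μ := by
    simpa using hminus.comp_add_right y
  calc
    ∫ x, v x * secondDiff u x y ∂μ
      = ∫ x, v x * (u x - u (x + y)) ∂μ + ∫ x, v x * (u x - u (x - y)) ∂μ := by
        rw [← integral_add hplus hminus]
        congr! 2 with x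
        rw [secondDiff]; ring
    _ = ∫ x, v x * (u x - u (x + y)) ∂μ + ∫ x, v (x + y) * (u (x + y) - u x) ∂μ := by
        rw [← integral_add_right_eq_self (fun x => v x * (u x - u (x - y))) y]
        simp only [add_sub_cancel_right]
    _ = ∫ x, (v (x + y) - v x) * (u (x + y) - u x) ∂μ := by
        rw [← integral_add hplus hshift]
        congr! 2 with x
        ring

theorem integral_mul_secondDiff_div [BorelSpace E] (hv : Continuous v) (hvc : HasCompactSupport v)
    (hu : Continuous u) (y : E) :
    ∫ x, v x * (secondDiff u x y / ‖y‖ ^ α) ∂μ =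
      (∫ x, (v (x + y) - v x) * (u (x + y) - u x) ∂μ) / ‖y‖ ^ α := by
  simp_rw [← integral_mul_secondDiff hv hvc hu, ← integral_div, mul_div_assoc]

variable [NormedSpace ℝ E] [FiniteDimensional ℝ E]

theorem SecondDiffLocIntegrable.locallyIntegrable_fracLapIntegral
    (hK : SecondDiffLocIntegrable μ α u) :
    LocallyIntegrable (fracLapIntegral μ α u) μ :=
  locallyIntegrable_iff.2 fun _ hk => (hK _ hk).integral_prod_left

variable [BorelSpace E]

theorem gagliardoForm_comp_smul (v w : E → ℝ) {l : ℝ} (hl : 0 < l) :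
    gagliardoForm μ α (fun x => v (l • x)) (fun x => w (l • x)) =
      l ^ (α - 2 * Module.finrank ℝ E) * gagliardoForm μ α v w := by
  set d := Module.finrank ℝ E
  set h : E → ℝ := fun y => ∫ x, (v (x + y) - v x) * (w (x + y) - w x) ∂μ
  have hlα : l ^ α ≠ 0 := (rpow_pos_of_pos hl α).ne'
  have inner_eq (y : E) : ∫ x, (v (l • (x + y)) - v (l • x)) * (w (l • (x + y)) - w (l • x)) ∂μ =
      (l ^ d)⁻¹ * h (l • y) := by
    simp only [smul_add]
    exact Measure.integral_comp_smul_of_nonneg μ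
      (fun x => (v (x + l • y) - v x) * (w (x + l • y) - w x)) l (hR := hl.le)
  have kernel_eq (y : E) : (l ^ d)⁻¹ * h (l • y) / ‖y‖ ^ α =
      (l ^ d)⁻¹ * l ^ α * (h (l • y) / ‖l • y‖ ^ α) := by
    rw [norm_smul, norm_of_nonneg hl.le, mul_rpow hl.le (norm_nonneg y)]
    field_simp
  calc
    gagliardoForm μ α (fun x => v (l • x)) (fun x => w (l • x))
      = (l ^ d)⁻¹ * l ^ α * ∫ y, h (l • y) / ‖l • y‖ ^ α ∂μ := by
        simp_rw [gagliardoForm, inner_eq, kernel_eq, integral_const_mul]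
    _ = (l ^ d)⁻¹ * l ^ α * ((l ^ d)⁻¹ * gagliardoForm μ α v w) := by
        congr 1
        exact Measure.integral_comp_smul_of_nonneg μ (fun y => h y / ‖y‖ ^ α) l (hR := hl.le)
    _ = l ^ (α - 2 * d) * gagliardoForm μ α v w := by
        rw [rpow_sub hl, two_mul, rpow_add hl, rpow_natCast]
        field_simp

theorem gagliardoForm_comp_smul_self (u : E → ℝ) {l : ℝ} (hl : 0 < l) :
    gagliardoForm μ α (fun x => u (l • x)) u =
      l ^ (α - 2 * Module.finrank ℝ E) * gagliardoForm μ α (fun x => u (l⁻¹ • x)) u := by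
  rw [gagliardoForm_comm μ α _ u, ← gagliardoForm_comp_smul _ _ hl]
  simp only [inv_smul_smul₀ hl.ne']

namespace SecondDiffLocIntegrable

theorem integrable_mul (hK : SecondDiffLocIntegrable μ α u) (hv : Continuous v)
    (hvc : HasCompactSupport v) :
    Integrable (fun p : E × E => v p.1 * (secondDiff u p.1 p.2 / ‖p.2‖ ^ α)) (μ.prod μ) := by
  obtain ⟨M, hM⟩ := hvc.exists_bound_of_continuous hv
  have hrestrict := (hK (tsupport v) hvc).bdd_mul (f := fun p : E × E => v p.1) (c := M)
    (Continuous.aestronglyMeasurable (by fun_prop)) (.of_forall fun p => hM p.1)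
  have hprod : (μ.restrict (tsupport v)).prod μ = (μ.prod μ).restrict (tsupport v ×ˢ univ) := by
    rw [← Measure.prod_restrict, Measure.restrict_univ]
  rw [hprod] at hrestrict
  refine (integrableOn_iff_integrable_of_support_subset fun p hp => ?_).1 hrestrict
  exact ⟨subset_tsupport v fun h => hp (by simp [h]), mem_univ _⟩

theorem integrable_gagliardoForm (hK : SecondDiffLocIntegrable μ α u) (hv : Continuous v)
    (hvc : HasCompactSupport v) (hu : Continuous u) :
    Integrable (fun y => (∫ x, (v (x + y) - v x) * (u (x + y) - u x) ∂μ) / ‖y‖ ^ α) μ := by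
  simpa only [integral_mul_secondDiff_div hv hvc hu] using
    (hK.integrable_mul hv hvc).integral_prod_right

theorem integral_mul_fracLapIntegral (hK : SecondDiffLocIntegrable μ α u) (hv : Continuous v)
    (hvc : HasCompactSupport v) (hu : Continuous u) :
    ∫ x, v x * fracLapIntegral μ α u x ∂μ = gagliardoForm μ α v u := by
  simp_rw [fracLapIntegral, ← integral_const_mul]
  rw [integral_integral_swap (hK.integrable_mul hv hvc)]
  simp only [integral_mul_secondDiff_div hv hvc hu, gagliardoForm]

end SecondDiffLocIntegrable

theorem gagliardoForm_self_eq_integral_prod (hu : Continuous u) (huc : HasCompactSupport u)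
    (hI : Integrable (fun y => (∫ x, (u (x + y) - u x) * (u (x + y) - u x) ∂μ) / ‖y‖ ^ α) μ) :
    gagliardoForm μ α u u =
      ∫ p : E × E, (u p.1 - u p.2) ^ 2 / ‖p.1 - p.2‖ ^ α ∂μ.prod μ := by
  have hprod : Integrable (fun p : E × E =>
      (u (p.1 + p.2) - u p.1) * (u (p.1 + p.2) - u p.1) / ‖p.2‖ ^ α) (μ.prod μ) := by
    refine (integrable_prod_iff' ?_).2 ⟨.of_forall fun y => ?_, hI.congr (.of_forall fun y => ?_)⟩
    · have hnum : Measurable fun p : E × E =>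
          (u (p.1 + p.2) - u p.1) * (u (p.1 + p.2) - u p.1) :=
        Continuous.measurable (by fun_prop)
      exact (hnum.div (measurable_snd.norm.pow_const _)).aestronglyMeasurable
    · have hshift : HasCompactSupport fun x => u (x + y) :=
        huc.comp_homeomorph (Homeomorph.addRight y)
      exact (Continuous.integrable_of_hasCompactSupport (by fun_prop)
        (hshift.sub huc).mul_right).div_const (‖y‖ ^ α)
    · have hnonneg (x : E) :
          0 ≤ (u (x + y) - u x) * (u (x + y) - u x) / ‖y‖ ^ α := by
        have := mul_self_nonneg (u (x + y) - u x)
        positivity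
      simp only [norm_of_nonneg (hnonneg _), integral_div]
  have hshear := (measurePreserving_prod_add μ μ).integral_comp
    (MeasurableEquiv.shearAddRight E).measurableEmbedding
    (fun p : E × E => (u p.1 - u p.2) ^ 2 / ‖p.1 - p.2‖ ^ α)
  simp only [gagliardoForm, ← integral_div]
  rw [← integral_prod_symm _ hprod, ← hshear]
  congr! 2 with p
  simp only [sub_add_cancel_left, norm_neg]
  ring

end GagliardoForm

section Dilation

variable {E : Type*} [NormedAddCommGroup E] [NormedSpace ℝ E] {u F : E → ℝ} {L : ℝ≥0}

theorem hasDerivAt_comp_smul_one {x : E} (hu : DifferentiableAt ℝ u x) :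
    HasDerivAt (fun l : ℝ => u (l • x)) (fderiv ℝ u x x) 1 := by
  have hsmul : HasDerivAt (fun l : ℝ => l • x) x 1 := by
    simpa using (hasDerivAt_id (1 : ℝ)).smul_const x
  exact HasFDerivAt.comp_hasDerivAt 1 (by simpa using hu.hasFDerivAt) hsmul

theorem exists_isCompact_forall_comp_smul_eq_zero (huc : HasCompactSupport u) :
    ∃ k, IsCompact k ∧ ∀ x ∉ k, ∀ l : ℝ, 1 / 2 < l → u (l • x) = 0 := by
  refine ⟨Icc (0 : ℝ) 2 • tsupport u, isCompact_Icc.smul_set huc, fun x hx l hl => ?_⟩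
  have hl0 : 0 < l := by linarith
  by_contra hux
  refine hx (mem_smul.2 ⟨l⁻¹, ⟨by positivity, ?_⟩, l • x, subset_tsupport u hux,
    inv_smul_smul₀ hl0.ne' x⟩)
  exact inv_le_of_inv_le₀ two_pos (by linarith)

theorem lipschitzOnWith_comp_smul_mul_const (hu : LipschitzWith L u) (x : E) (c : ℝ) (s : Set ℝ) :
    LipschitzOnWith (Real.nnabs (L * ‖x‖ * |c|)) (fun l : ℝ => u (l • x) * c) s := by
  refine LipschitzOnWith.of_dist_le_mul fun a _ b _ => ?_
  have h := hu.dist_le_mul (a • x) (b • x)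
  rw [dist_eq_norm (a • x), ← sub_smul, norm_smul, Real.dist_eq] at h
  rw [Real.dist_eq, ← sub_mul, abs_mul, Real.coe_nnabs,
    abs_of_nonneg (by positivity : 0 ≤ L * ‖x‖ * |c|), Real.dist_eq]
  calc
    |u (a • x) - u (b • x)| * |c| ≤ L * (‖a - b‖ * ‖x‖) * |c| := by gcongr
    _ = L * ‖x‖ * |c| * |a - b| := by rw [Real.norm_eq_abs]; ring

variable [FiniteDimensional ℝ E] [MeasurableSpace E] [BorelSpace E] {μ : Measure E}
  [μ.IsAddHaarMeasure]

theorem hasDerivAt_integral_comp_smul_mul (hu : LipschitzWith L u) (huc : HasCompactSupport u)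
    (hF : LocallyIntegrable F μ) :
    HasDerivAt (fun l : ℝ => ∫ x, u (l • x) * F x ∂μ) (∫ x, fderiv ℝ u x x * F x ∂μ) 1 := by
  obtain ⟨k, hk, hzero⟩ := exists_isCompact_forall_comp_smul_eq_zero huc
  have hcont := hu.continuous
  have hFm := hF.aestronglyMeasurable
  have hfderiv_meas : Measurable fun x => fderiv ℝ u x x :=
    (by fun_prop : Continuous fun p : (E →L[ℝ] ℝ) × E => p.1 p.2).measurable.comp
      ((measurable_fderiv ℝ u).prodMk measurable_id)
  have hbound : Integrable (k.indicator fun x => L * ‖x‖ * |F x|) μ :=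
    (IntegrableOn.continuousOn_mul (by fun_prop) (hF.integrableOn_isCompact hk).abs
      hk).integrable_indicator hk.measurableSet
  refine (hasDerivAt_integral_of_dominated_loc_of_lip (s := Ioi (1 / 2))
    (Ioi_mem_nhds (by norm_num)) (.of_forall fun l => ?_) ?_ ?_ (.of_forall fun x => ?_) hbound
    ?_).2
  · exact (Continuous.aestronglyMeasurable (by fun_prop)).mul hFm
  · simpa only [one_smul, smul_eq_mul] using
      hF.integrable_smul_left_of_hasCompactSupport hcont huc
  · exact hfderiv_meas.aestronglyMeasurable.mul hFm
  · by_cases hx : x ∈ k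
    · simpa only [indicator_of_mem hx] using lipschitzOnWith_comp_smul_mul_const hu x (F x) _
    · refine LipschitzOnWith.of_dist_le_mul fun a ha b hb => ?_
      simp [hx, hzero x hx a ha, hzero x hx b hb]
  · filter_upwards [hu.ae_differentiableAt (μ := μ)] with x hx
    exact (hasDerivAt_comp_smul_one hx).mul_const (F x)

theorem two_mul_eq_of_hasDerivAt_of_eventuallyEq_inv {g : ℝ → ℝ} {g' p : ℝ}
    (hg : HasDerivAt g g' 1) (hinv : g =ᶠ[𝓝 1] fun l => l ^ p * g l⁻¹) :
    2 * g' = p * g 1 := by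
  have hg_inv : HasDerivAt (fun l => g l⁻¹) (g' * -1) 1 := by
    have := hasDerivAt_inv (one_ne_zero (α := ℝ))
    exact HasDerivAt.comp 1 (by simpa using hg) (by simpa using this)
  have hrpow : HasDerivAt (fun l : ℝ => l ^ p) p 1 := by
    simpa using Real.hasDerivAt_rpow_const (x := 1) (p := p) (.inl one_ne_zero)
  have h := hg.unique ((hrpow.mul hg_inv).congr_of_eventuallyEq hinv)
  simp only [inv_one, one_rpow] at h
  linarith

theorem two_mul_integral_fderiv_self_mul_fracLapIntegral {α : ℝ} (hu : LipschitzWith L u)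
    (huc : HasCompactSupport u) (hK : SecondDiffLocIntegrable μ α u) :
    2 * ∫ x, fderiv ℝ u x x * fracLapIntegral μ α u x ∂μ =
      (α - 2 * Module.finrank ℝ E) * gagliardoForm μ α u u := by
  have hcont := hu.continuous
  have form_eq {l : ℝ} (hl : 0 < l) : ∫ x, u (l • x) * fracLapIntegral μ α u x ∂μ =
      gagliardoForm μ α (fun x => u (l • x)) u :=
    hK.integral_mul_fracLapIntegral (by fun_prop) (huc.comp_smul hl.ne') hcont
  have hinv : (fun l : ℝ => ∫ x, u (l • x) * fracLapIntegral μ α u x ∂μ) =ᶠ[𝓝 1] fun l =>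
      l ^ (α - 2 * Module.finrank ℝ E) * ∫ x, u (l⁻¹ • x) * fracLapIntegral μ α u x ∂μ := by
    filter_upwards [Ioi_mem_nhds one_pos] with l hl
    rw [form_eq hl, form_eq (inv_pos.2 hl), gagliardoForm_comp_smul_self u hl]
  have form_one := form_eq one_pos
  have h := two_mul_eq_of_hasDerivAt_of_eventuallyEq_inv
    (hasDerivAt_integral_comp_smul_mul hu huc hK.locallyIntegrable_fracLapIntegral) hinv
  simp only [one_smul] at form_one h
  rw [h, form_one]

end Dilation

theorem notMem_of_infDist_pos {X : Type*} [PseudoMetricSpace X] {S : Set X} {x : X}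
    (hx : 0 < infDist x S) : x ∉ S :=
  fun h => hx.ne' (infDist_zero_of_mem h)

section SecondDiffBound

variable {E : Type*} [NormedAddCommGroup E] {u : E → ℝ} {x y : E} {L : ℝ≥0}

theorem abs_secondDiff_le_of_abs_le {M : ℝ} (hM : ∀ z, |u z| ≤ M) (x y : E) :
    |secondDiff u x y| ≤ 4 * M := by
  have hx := abs_le.1 (hM x)
  have hadd := abs_le.1 (hM (x + y))
  have hsub := abs_le.1 (hM (x - y))
  rw [secondDiff, abs_le]
  constructor <;> linarith

theorem abs_secondDiff_le_of_lipschitzWith (hu : LipschitzWith L u) (x y : E) :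
    |secondDiff u x y| ≤ 2 * L * ‖y‖ := by
  have hadd := hu.dist_le_mul x (x + y)
  have hsub := hu.dist_le_mul x (x - y)
  rw [Real.dist_eq, dist_self_add_right] at hadd
  rw [Real.dist_eq, dist_self_sub_right] at hsub
  calc
    |secondDiff u x y| = |(u x - u (x + y)) + (u x - u (x - y))| := by
      rw [secondDiff]; congr 1; ring
    _ ≤ |u x - u (x + y)| + |u x - u (x - y)| := abs_add_le _ _
    _ ≤ 2 * L * ‖y‖ := by linarith

variable [NormedSpace ℝ E] {r K : ℝ}

theorem abs_sub_sub_fderiv_le_of_norm_hessian_le (hu : ∀ z ∈ closedBall x r, ContDiffAt ℝ 2 u z)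
    (hK : ∀ z ∈ closedBall x r, ‖fderiv ℝ (fderiv ℝ u) z‖ ≤ K) (hy : ‖y‖ ≤ r) :
    |u (x + y) - u x - fderiv ℝ u x y| ≤ K * ‖y‖ ^ 2 := by
  have hx : x ∈ closedBall x ‖y‖ := mem_closedBall_self (norm_nonneg y)
  have hsub : closedBall x ‖y‖ ⊆ closedBall x r := closedBall_subset_closedBall hy
  have hK0 : 0 ≤ K := (norm_nonneg (fderiv ℝ (fderiv ℝ u) x)).trans (hK x (hsub hx))
  have hfderiv : ∀ z ∈ closedBall x ‖y‖, ‖fderiv ℝ u z - fderiv ℝ u x‖ ≤ K * ‖y‖ := by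
    intro z hz
    refine ((convex_closedBall x ‖y‖).norm_image_sub_le_of_norm_fderiv_le (fun w hw => ?_)
      (fun w hw => hK w (hsub hw)) hx hz).trans ?_
    · exact ((hu w (hsub hw)).fderiv_right (m := 1) (by norm_num)).differentiableAt one_ne_zero
    · gcongr
      exact mem_closedBall_iff_norm.1 hz
  have h := (convex_closedBall x ‖y‖).norm_image_sub_le_of_norm_fderiv_le'
    (fun z hz => (hu z (hsub hz)).differentiableAt two_ne_zero) hfderiv hx
    (y := x + y) (by simp)
  rw [add_sub_cancel_left, Real.norm_eq_abs] at h
  exact h.trans_eq (by ring)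

theorem abs_secondDiff_le_of_norm_hessian_le (hu : ∀ z ∈ closedBall x r, ContDiffAt ℝ 2 u z)
    (hK : ∀ z ∈ closedBall x r, ‖fderiv ℝ (fderiv ℝ u) z‖ ≤ K) (hy : ‖y‖ ≤ r) :
    |secondDiff u x y| ≤ 2 * K * ‖y‖ ^ 2 := by
  have hadd := abs_le.1 (abs_sub_sub_fderiv_le_of_norm_hessian_le hu hK hy)
  have hsub := abs_le.1 (abs_sub_sub_fderiv_le_of_norm_hessian_le (y := -y) hu hK (by simpa))
  rw [← sub_eq_add_neg, map_neg, norm_neg] at hsub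
  rw [secondDiff, abs_le]
  constructor <;> linarith

variable {Γ : Set E} {A β : ℝ}

theorem nonneg_of_norm_hessian_le_div_infDist
    (hA : ∀ z ∉ Γ, ‖fderiv ℝ (fderiv ℝ u) z‖ ≤ A / infDist z Γ) (hx : 0 < infDist x Γ) : 0 ≤ A := by
  have := (norm_nonneg (fderiv ℝ (fderiv ℝ u) x)).trans (hA x (notMem_of_infDist_pos hx))
  simpa using (le_div_iff₀ hx).1 this

theorem abs_secondDiff_le_of_norm_le_half_infDist (hC2 : ∀ z ∉ Γ, ContDiffAt ℝ 2 u z)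
    (hA : ∀ z ∉ Γ, ‖fderiv ℝ (fderiv ℝ u) z‖ ≤ A / infDist z Γ)
    (hx : 0 < infDist x Γ) (hy : ‖y‖ ≤ infDist x Γ / 2) :
    |secondDiff u x y| ≤ 2 * (A / (infDist x Γ / 2)) * ‖y‖ ^ 2 := by
  have hA0 := nonneg_of_norm_hessian_le_div_infDist hA hx
  have half_le : ∀ z ∈ closedBall x (infDist x Γ / 2), infDist x Γ / 2 ≤ infDist z Γ :=
    fun z hz => by
      have := infDist_le_infDist_add_dist (s := Γ) (x := x) (y := z)
      linarith [mem_closedBall'.1 hz]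
  have notMem : ∀ z ∈ closedBall x (infDist x Γ / 2), z ∉ Γ := fun z hz =>
    notMem_of_infDist_pos ((half_pos hx).trans_le (half_le z hz))
  refine abs_secondDiff_le_of_norm_hessian_le (fun z hz => hC2 z (notMem z hz))
    (fun z hz => (hA z (notMem z hz)).trans ?_) hy
  gcongr
  exact half_le z hz

/- With `t = 2‖y‖ / d`, the Hessian bound gives `2A‖y‖t` for `t ≤ 1` and the Lipschitz bound gives
`2L‖y‖` for `t ≥ 1`; both are at most `2(A + L)‖y‖t ^ β`. -/
theorem abs_secondDiff_le_infDist_rpow (hu : LipschitzWith L u)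
    (hC2 : ∀ z ∉ Γ, ContDiffAt ℝ 2 u z)
    (hA : ∀ z ∉ Γ, ‖fderiv ℝ (fderiv ℝ u) z‖ ≤ A / infDist z Γ) (hβ : β ∈ Icc (0 : ℝ) 1)
    (hx : 0 < infDist x Γ) (y : E) :
    |secondDiff u x y| ≤ 4 * (A + L) * infDist x Γ ^ (-β) * ‖y‖ ^ (1 + β) := by
  have hA0 := nonneg_of_norm_hessian_le_div_infDist hA hx
  set d := infDist x Γ
  set t := ‖y‖ / (d / 2)
  have ht0 : 0 ≤ t := by positivity
  have interpolated : |secondDiff u x y| ≤ 2 * (A + L) * ‖y‖ * t ^ β := by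
    rcases le_total t 1 with ht | ht
    · calc
        |secondDiff u x y| ≤ 2 * (A / (d / 2)) * ‖y‖ ^ 2 :=
          abs_secondDiff_le_of_norm_le_half_infDist hC2 hA hx ((div_le_one (by positivity)).1 ht)
        _ = 2 * A * ‖y‖ * t := by ring
        _ ≤ 2 * (A + L) * ‖y‖ * t ^ β := by
          gcongr
          · exact le_add_of_nonneg_right L.coe_nonneg
          · exact self_le_rpow_of_le_one ht0 ht hβ.2
    · calc
        |secondDiff u x y| ≤ 2 * L * ‖y‖ * 1 := by
          simpa using abs_secondDiff_le_of_lipschitzWith hu x y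
        _ ≤ 2 * (A + L) * ‖y‖ * t ^ β := by
          gcongr
          · exact le_add_of_nonneg_left hA0
          · exact one_le_rpow ht hβ.1
  have ht_rpow : t ^ β ≤ 2 * d ^ (-β) * ‖y‖ ^ β := by
    have : (2 : ℝ) ^ β ≤ 2 := by simpa using rpow_le_rpow_of_exponent_le one_le_two hβ.2
    calc
      t ^ β = 2 ^ β * d ^ (-β) * ‖y‖ ^ β := by
        rw [div_rpow (norm_nonneg y) (by positivity), div_rpow hx.le two_pos.le, rpow_neg hx.le]
        field_simp
      _ ≤ 2 * d ^ (-β) * ‖y‖ ^ β := by gcongr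
  calc
    |secondDiff u x y| ≤ 2 * (A + L) * ‖y‖ * (2 * d ^ (-β) * ‖y‖ ^ β) :=
      interpolated.trans (by gcongr)
    _ = 4 * (A + L) * d ^ (-β) * ‖y‖ ^ (1 + β) := by
      rw [rpow_one_add' (norm_nonneg y) (by linarith [hβ.1])]; ring

end SecondDiffBound

section KernelIntegrability

variable {E : Type*} [NormedAddCommGroup E] [NormedSpace ℝ E] [FiniteDimensional ℝ E]
  [MeasurableSpace E] [BorelSpace E] {μ : Measure E} [μ.IsAddHaarMeasure] {α : ℝ}

theorem integrable_min_norm_rpow_one_div_norm_rpow {p : ℝ} (hE : 1 ≤ Module.finrank ℝ E)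
    (hα : Module.finrank ℝ E < α) (hαp : α < Module.finrank ℝ E + p) :
    Integrable (fun y : E => min (‖y‖ ^ p) 1 / ‖y‖ ^ α) μ := by
  have hα0 : 0 < α := (Nat.cast_nonneg _).trans_lt hα
  have hmeas : AEStronglyMeasurable (fun y : E => min (‖y‖ ^ p) 1 / ‖y‖ ^ α) μ :=
    Measurable.aestronglyMeasurable (by fun_prop)
  have norm_eq (y : E) : ‖min (‖y‖ ^ p) 1 / ‖y‖ ^ α‖ = min (‖y‖ ^ p) 1 / ‖y‖ ^ α :=
    norm_of_nonneg (by positivity)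
  rw [← integrableOn_univ, ← union_compl_self (ball (0 : E) 1), integrableOn_union]
  constructor
  · refine integrableOn_ball_of_norm_le_rpow (C := 1) hE (α := α - p) (by linarith)
      (.of_forall fun y => ?_) hmeas
    rw [norm_eq, one_mul, neg_sub]
    rcases (norm_nonneg y).eq_or_lt with hy | hy
    · rw [← hy, zero_rpow hα0.ne', div_zero]
      positivity
    · rw [rpow_sub hy]
      gcongr
      exact min_le_left _ _
  · refine ((integrable_one_add_norm hα).integrableOn.const_mul (2 ^ α)).mono' hmeas.restrict ?_
    filter_upwards [ae_restrict_mem measurableSet_ball.compl] with y hy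
    have hy1 : 1 ≤ ‖y‖ := by simpa using hy
    calc
      ‖min (‖y‖ ^ p) 1 / ‖y‖ ^ α‖ ≤ 1 / ‖y‖ ^ α := by
        rw [norm_eq]
        gcongr
        exact min_le_right _ _
      _ = 2 ^ α * (2 * ‖y‖) ^ (-α) := by
        rw [mul_rpow two_pos.le (norm_nonneg y), rpow_neg two_pos.le, rpow_neg (norm_nonneg y)]
        field_simp
      _ ≤ 2 ^ α * (1 + ‖y‖) ^ (-α) := by
        gcongr ?_ * ?_
        exact rpow_le_rpow_of_nonpos (by positivity) (by linarith) (by linarith)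

theorem secondDiffLocIntegrable_of_abs_le {u H : E → ℝ} {p : ℝ} (hE : 1 ≤ Module.finrank ℝ E)
    (hα : Module.finrank ℝ E < α) (hαp : α < Module.finrank ℝ E + p) (hu : Continuous u)
    (hH : LocallyIntegrable H μ)
    (hbound : ∀ᵐ x ∂μ, ∀ y, |secondDiff u x y| ≤ H x * min (‖y‖ ^ p) 1) :
    SecondDiffLocIntegrable μ α u := by
  intro k hk
  refine ((hH.integrableOn_isCompact hk).mul_prod
    (integrable_min_norm_rpow_one_div_norm_rpow (μ := μ) hE hα hαp)).mono' ?_ ?_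
  · have hnum : Measurable fun q : E × E => secondDiff u q.1 q.2 :=
      Continuous.measurable (by unfold secondDiff; fun_prop)
    exact (hnum.div (by fun_prop)).aestronglyMeasurable
  · filter_upwards [Measure.quasiMeasurePreserving_fst.ae (ae_restrict_of_ae hbound)] with q hq
    rw [norm_div, Real.norm_eq_abs, norm_of_nonneg (by positivity), ← mul_div_assoc]
    gcongr
    exact hq q.2

theorem secondDiffLocIntegrable_of_norm_hessian_le {u : E → ℝ} {L : ℝ≥0} {Γ : Set E} {A β : ℝ}
    (hE : 1 ≤ Module.finrank ℝ E) (hα : Module.finrank ℝ E < α)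
    (hαβ : α < Module.finrank ℝ E + (1 + β)) (hβ : β ∈ Icc (0 : ℝ) 1)
    (hu : LipschitzWith L u) (hbdd : ∃ M, ∀ x, |u x| ≤ M)
    (hΓ : IsClosed Γ) (hne : Γ.Nonempty) (hnull : μ Γ = 0)
    (hdist : LocallyIntegrable (fun x => infDist x Γ ^ (-β)) μ)
    (hC2 : ∀ x ∉ Γ, ContDiffAt ℝ 2 u x)
    (hA : ∀ x ∉ Γ, ‖fderiv ℝ (fderiv ℝ u) x‖ ≤ A / infDist x Γ) :
    SecondDiffLocIntegrable μ α u := by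
  obtain ⟨M, hM⟩ := hbdd
  have hM0 : 0 ≤ M := (abs_nonneg _).trans (hM 0)
  refine secondDiffLocIntegrable_of_abs_le hE hα hαβ hu.continuous
    (H := fun x => 4 * M + 4 * (A + L) * infDist x Γ ^ (-β))
    ((locallyIntegrable_const _).add (hdist.smul (4 * (A + L)))) ?_
  filter_upwards [measure_eq_zero_iff_ae_notMem.1 hnull] with x hx y
  have hd : 0 < infDist x Γ := (hΓ.notMem_iff_infDist_pos hne).1 hx
  have hA0 := nonneg_of_norm_hessian_le_div_infDist hA hd
  rcases le_total (‖y‖ ^ (1 + β)) 1 with hy | hy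
  · rw [min_eq_left hy]
    refine (abs_secondDiff_le_infDist_rpow hu hC2 hA hβ hd y).trans ?_
    gcongr
    linarith
  · rw [min_eq_right hy, mul_one]
    exact (abs_secondDiff_le_of_abs_le hM x y).trans (le_add_of_nonneg_right (by positivity))

end KernelIntegrability

section TwoPoint

theorem eventually_abs_le_mul_infDist {X : Type*} [PseudoMetricSpace X] [ProperSpace X]
    {S U : Set X} {x₀ : X} {f : X → ℝ} {K : ℝ≥0} (hS : IsClosed S) (hx₀ : x₀ ∈ S) (hU : U ∈ 𝓝 x₀)
    (hf : LipschitzOnWith K f U) (hS0 : ∀ x ∈ S, f x = 0) :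
    ∀ᶠ x in 𝓝 x₀, |f x| ≤ K * infDist x S := by
  obtain ⟨ρ, hρ, hρU⟩ := Metric.mem_nhds_iff.1 hU
  filter_upwards [ball_mem_nhds x₀ (half_pos hρ)] with x hx
  obtain ⟨p, hpS, hp⟩ := hS.exists_infDist_eq_dist ⟨x₀, hx₀⟩ x
  have hxp : dist x p ≤ dist x x₀ := hp ▸ infDist_le_dist_of_mem hx₀
  rw [mem_ball] at hx
  have hpU : p ∈ U := hρU (mem_ball.2 (by linarith [dist_triangle_left p x₀ x]))
  have hxU : x ∈ U := hρU (mem_ball.2 (by linarith))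
  simpa [hS0 p hpS, Real.dist_eq, hp] using hf.dist_le_mul x hxU p hpU

variable {E : Type*} [NormedAddCommGroup E] [NormedSpace ℝ E]

theorem exists_half_abs_le_of_hasStrictFDerivAt {f : E → ℝ} {f' : E →L[ℝ] ℝ} {x₀ e : E}
    (hf : HasStrictFDerivAt f f' x₀) (he : f' e = 1) :
    ∃ U ∈ 𝓝 x₀, ∀ x ∈ U, ∀ t : ℝ, x + t • e ∈ U → |t| / 2 ≤ |f x| + |f (x + t • e)| := by
  have he0 : e ≠ 0 := fun h => by simp [h] at he
  obtain ⟨U, hU, happrox⟩ := hf.approximates_deriv_on_nhds (c := (2 * ‖e‖₊)⁻¹)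
    (.inr (inv_pos.2 (mul_pos two_pos (nnnorm_pos.2 he0))))
  refine ⟨U, hU, fun x hx t hxt => ?_⟩
  have h := happrox (x + t • e) hxt x hx
  have hr : ((2 * ‖e‖₊)⁻¹ : ℝ≥0) * ‖t • e‖ = |t| / 2 := by
    rw [norm_smul, Real.norm_eq_abs]
    push_cast
    field_simp
  rw [add_sub_cancel_left, hr, map_smul, he, smul_eq_mul, mul_one, Real.norm_eq_abs] at h
  have := abs_sub_abs_le_abs_sub t (t - (f (x + t • e) - f x))
  rw [sub_sub_cancel, abs_sub_comm t] at this
  linarith [abs_sub (f (x + t • e)) (f x)]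

theorem exists_mul_abs_le_infDist_add_infDist_of_hasStrictFDerivAt [ProperSpace E]
    {S : Set E} {f : E → ℝ} {f' : E →L[ℝ] ℝ} {x₀ e : E}
    (hf : HasStrictFDerivAt f f' x₀) (he : f' e = 1) (hS : IsClosed S) (hx₀ : x₀ ∈ S)
    (hS0 : ∀ x ∈ S, f x = 0) :
    ∃ c > 0, ∃ U ∈ 𝓝 x₀, ∀ x ∈ U, ∀ t : ℝ, x + t • e ∈ U →
      c * |t| ≤ infDist x S + infDist (x + t • e) S := by
  obtain ⟨U, hU, hfU⟩ := exists_half_abs_le_of_hasStrictFDerivAt hf he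
  obtain ⟨K, W, hW, hK⟩ := hf.exists_lipschitzOnWith
  refine ⟨(2 * (K + 1))⁻¹, by positivity, _,
    inter_mem hU (eventually_abs_le_mul_infDist hS hx₀ hW hK hS0), ?_⟩
  rintro x ⟨hxU, hx⟩ t ⟨hyU, hy⟩
  rw [inv_mul_le_iff₀ (by positivity)]
  have := hfU x hxU t hyU
  rw [mem_ofPred_eq] at hx hy
  nlinarith [infDist_nonneg (x := x) (s := S), infDist_nonneg (x := x + t • e) (s := S)]

end TwoPoint

section DistancePower

theorem half_mul_abs_sub_le_of_isMinOn {S : Set ℝ} {g : ℝ → ℝ} {c τ t : ℝ}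
    (hg : ∀ a ∈ S, ∀ b ∈ S, c * |a - b| ≤ g a + g b) (hτ : τ ∈ S) (hmin : IsMinOn g S τ)
    (ht : t ∈ S) : c / 2 * |t - τ| ≤ g t := by
  linarith [hg t ht τ hτ, isMinOn_iff.1 hmin t ht]

/- The two-point bound makes `g` grow linearly away from its minimum point. -/
theorem lintegral_rpow_neg_le_of_mul_abs_sub_le {g : ℝ → ℝ} {c δ β : ℝ} (hδ : 0 ≤ δ) (hc : 0 < c)
    (hβ : 0 ≤ β) (hcont : ContinuousOn g (Icc 0 δ))
    (hg : ∀ a ∈ Icc 0 δ, ∀ b ∈ Icc 0 δ, c * |a - b| ≤ g a + g b) :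
    ∫⁻ t in Icc 0 δ, ENNReal.ofReal (g t ^ (-β)) ≤
      ∫⁻ r in Icc (-δ) δ, ENNReal.ofReal ((c / 2 * |r|) ^ (-β)) := by
  obtain ⟨τ, hτ, hmin⟩ := isCompact_Icc.exists_isMinOn (nonempty_Icc.2 hδ) hcont
  calc
    ∫⁻ t in Icc 0 δ, ENNReal.ofReal (g t ^ (-β))
      ≤ ∫⁻ t in Icc 0 δ, ENNReal.ofReal ((c / 2 * |t - τ|) ^ (-β)) := by
        refine setLIntegral_mono_ae' measurableSet_Icc ?_
        filter_upwards [Measure.ae_ne volume τ] with t htτ ht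
        have : 0 < |t - τ| := abs_pos.2 (sub_ne_zero.2 htτ)
        exact ENNReal.ofReal_le_ofReal (rpow_le_rpow_of_nonpos (by positivity)
          (half_mul_abs_sub_le_of_isMinOn hg hτ hmin ht) (neg_nonpos.2 hβ))
    _ ≤ ∫⁻ t in (fun t => t - τ) ⁻¹' Icc (-δ) δ, ENNReal.ofReal ((c / 2 * |t - τ|) ^ (-β)) := by
        refine lintegral_mono_set fun t ht => ?_
        exact ⟨by linarith [ht.1, hτ.2], by linarith [ht.2, hτ.1]⟩
    _ = ∫⁻ r in Icc (-δ) δ, ENNReal.ofReal ((c / 2 * |r|) ^ (-β)) :=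
        (measurePreserving_sub_right volume τ).setLIntegral_comp_preimage measurableSet_Icc
          (f := fun r => ENNReal.ofReal ((c / 2 * |r|) ^ (-β))) (by fun_prop)

theorem lintegral_mul_abs_rpow_neg_lt_top {c β : ℝ} (hc : 0 ≤ c) (hβ : β < 1) (δ : ℝ) :
    ∫⁻ r in Icc (-δ) δ, ENNReal.ofReal ((c * |r|) ^ (-β)) < ∞ := by
  have hlocal : LocallyIntegrable (fun r : ℝ => (c * |r|) ^ (-β)) := by
    refine locallyIntegrable_of_norm_le_rpow (C := c ^ (-β)) (α := β) (by simp) (by simpa)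
      (.of_forall fun r => ?_) (Measurable.aestronglyMeasurable (by fun_prop))
    rw [norm_of_nonneg (by positivity), mul_rpow hc (abs_nonneg r), Real.norm_eq_abs]
  exact (hlocal.integrableOn_isCompact isCompact_Icc).setLIntegral_lt_top

variable {E : Type*} [NormedAddCommGroup E] [NormedSpace ℝ E] [MeasurableSpace E] [BorelSpace E]
  [FiniteDimensional ℝ E] {μ : Measure E} [μ.IsAddHaarMeasure]

theorem mul_lintegral_ball_le_lintegral_lintegral_segment {G : E → ℝ≥0∞} (hG : Measurable G)
    (x₀ e : E) (r δ : ℝ) :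
    ENNReal.ofReal δ * ∫⁻ x in ball x₀ r, G x ∂μ ≤
      ∫⁻ x in ball x₀ (r + δ * ‖e‖), (∫⁻ t in Icc 0 δ, G (x + t • e)) ∂μ := by
  have translate_le : ∀ t ∈ Icc 0 δ,
      ∫⁻ x in ball x₀ r, G x ∂μ ≤ ∫⁻ x in ball x₀ (r + δ * ‖e‖), G (x + t • e) ∂μ := by
    intro t ht
    rw [← (measurePreserving_add_right μ (t • e)).setLIntegral_comp_preimage measurableSet_ball hG]
    refine lintegral_mono_set fun x hx => ?_
    rw [mem_preimage, mem_ball_iff_norm] at hx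
    rw [mem_ball_iff_norm]
    calc
      ‖x - x₀‖ = ‖(x + t • e - x₀) - t • e‖ := by congr 1; abel
      _ ≤ ‖x + t • e - x₀‖ + ‖t • e‖ := norm_sub_le _ _
      _ < r + δ * ‖e‖ := by
        rw [norm_smul, norm_of_nonneg ht.1]
        have := mul_le_mul_of_nonneg_right ht.2 (norm_nonneg e)
        linarith
  calc
    ENNReal.ofReal δ * ∫⁻ x in ball x₀ r, G x ∂μ
      = ∫⁻ _ in Icc 0 δ, (∫⁻ x in ball x₀ r, G x ∂μ) := by
        rw [setLIntegral_const, Real.volume_Icc, sub_zero, mul_comm]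
    _ ≤ ∫⁻ t in Icc 0 δ, (∫⁻ x in ball x₀ (r + δ * ‖e‖), G (x + t • e) ∂μ) :=
        setLIntegral_mono' measurableSet_Icc translate_le
    _ = ∫⁻ x in ball x₀ (r + δ * ‖e‖), (∫⁻ t in Icc 0 δ, G (x + t • e)) ∂μ :=
        lintegral_lintegral_swap
          (hG.comp (Continuous.measurable (by fun_prop : Continuous fun p : ℝ × E =>
            p.2 + p.1 • e))).aemeasurable

theorem integrableAtFilter_rpow_neg_of_mul_abs_le {g : E → ℝ} (hg : Continuous g) {U : Set E}
    {x₀ e : E} {c β : ℝ} (hc : 0 < c) (hβ : β ∈ Ico (0 : ℝ) 1) (hU : U ∈ 𝓝 x₀)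
    (hgU : ∀ x ∈ U, ∀ t : ℝ, x + t • e ∈ U → c * |t| ≤ g x + g (x + t • e)) :
    IntegrableAtFilter (fun x => g x ^ (-β)) (𝓝 x₀) μ := by
  obtain ⟨ρ, hρ, hρU⟩ := Metric.mem_nhds_iff.1 hU
  obtain ⟨δ, hδ, hδe⟩ : ∃ δ : ℝ, 0 < δ ∧ ‖e‖ * δ < ρ / 3 :=
    exists_pos_mul_lt (by positivity) _
  have segment_mem : ∀ x ∈ ball x₀ (ρ / 3 + δ * ‖e‖), ∀ t ∈ Icc 0 δ, x + t • e ∈ U := by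
    intro x hx t ht
    refine hρU (mem_ball_iff_norm.2 ?_)
    calc
      ‖x + t • e - x₀‖ = ‖(x - x₀) + t • e‖ := by rw [add_sub_right_comm]
      _ ≤ ‖x - x₀‖ + ‖t • e‖ := norm_add_le _ _
      _ ≤ ‖x - x₀‖ + δ * ‖e‖ := by
        rw [norm_smul, norm_of_nonneg ht.1]
        gcongr
        exact ht.2
      _ < ρ := by linarith [mem_ball_iff_norm.1 hx]
  have segment_bound : ∀ x ∈ ball x₀ (ρ / 3 + δ * ‖e‖),
      ∫⁻ t in Icc 0 δ, ENNReal.ofReal (g (x + t • e) ^ (-β)) ≤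
        ∫⁻ r in Icc (-δ) δ, ENNReal.ofReal ((c / 2 * |r|) ^ (-β)) := by
    intro x hx
    refine lintegral_rpow_neg_le_of_mul_abs_sub_le hδ.le hc hβ.1 (by fun_prop) fun a ha b hb => ?_
    have := hgU _ (segment_mem x hx b hb) (a - b)
    rw [add_assoc, ← add_smul, add_sub_cancel] at this
    linarith [this (segment_mem x hx a ha)]
  have lt_top : ∫⁻ x in ball x₀ (ρ / 3), ENNReal.ofReal (g x ^ (-β)) ∂μ < ∞ := by
    refine ENNReal.lt_top_of_mul_ne_top_right (ne_top_of_le_ne_top ?_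
      ((mul_lintegral_ball_le_lintegral_lintegral_segment (by fun_prop) x₀ e (ρ / 3) δ).trans
        (setLIntegral_mono' measurableSet_ball segment_bound))) (by simpa)
    rw [setLIntegral_const]
    exact ENNReal.mul_ne_top (lintegral_mul_abs_rpow_neg_lt_top (by positivity) hβ.2 δ).ne
      measure_ball_lt_top.ne
  have nonneg : 0 ≤ᵐ[μ.restrict (ball x₀ (ρ / 3))] fun x => g x ^ (-β) := by
    filter_upwards [ae_restrict_mem measurableSet_ball] with x hx
    have hxU : x ∈ U := hρU (ball_subset_ball (by linarith) hx)
    exact rpow_nonneg (by simpa using hgU x hxU 0 (by simpa using hxU)) _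
  exact ⟨ball x₀ (ρ / 3), ball_mem_nhds _ (by positivity),
    Measurable.aestronglyMeasurable (by fun_prop), (hasFiniteIntegral_iff_ofReal nonneg).2 lt_top⟩

theorem locallyIntegrable_infDist_rpow_neg {S : Set E} {β : ℝ} (hS : IsClosed S) (hne : S.Nonempty)
    (hβ : β ∈ Ico (0 : ℝ) 1)
    (hdef : ∀ x ∈ S, ∃ f : E → ℝ, ∃ f' : E →L[ℝ] ℝ, f' ≠ 0 ∧
      HasStrictFDerivAt f f' x ∧ ∀ y ∈ S, f y = 0) :
    LocallyIntegrable (fun x => infDist x S ^ (-β)) μ := by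
  intro x
  by_cases hx : x ∈ S
  · obtain ⟨f, f', hf'0, hf, hfS⟩ := hdef x hx
    obtain ⟨v, hv⟩ : ∃ v, f' v ≠ 0 := DFunLike.ne_iff.1 hf'0
    have he : f' ((f' v)⁻¹ • v) = 1 := by rw [map_smul, smul_eq_mul, inv_mul_cancel₀ hv]
    obtain ⟨c, hc, U, hU, hbound⟩ :=
      exists_mul_abs_le_infDist_add_infDist_of_hasStrictFDerivAt hf he hS hx hfS
    exact integrableAtFilter_rpow_neg_of_mul_abs_le (continuous_infDist_pt S) hc hβ hU hbound
  · have hcont : ContinuousOn (fun x => infDist x S ^ (-β)) Sᶜ :=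
      (continuous_infDist_pt S).continuousOn.rpow_const fun y hy =>
        .inl ((hS.notMem_iff_infDist_pos hne).1 hy).ne'
    have := hcont.integrableAt_nhdsWithin (μ := μ) hS.isOpen_compl.measurableSet hx
    rwa [hS.isOpen_compl.nhdsWithin_eq hx] at this

theorem ae_fderiv_eq_zero_of_eq_zero {f : E → ℝ} (hf : Differentiable ℝ f) :
    ∀ᵐ x ∂μ, f x = 0 → fderiv ℝ f x = 0 := by
  rcases subsingleton_or_nontrivial E with _ | _
  · exact .of_forall fun x _ => Subsingleton.elim _ _
  obtain ⟨e, he⟩ := exists_ne (0 : E)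
  have hs : MeasurableSet {x | f x = 0} := hf.continuous.measurable (measurableSet_singleton 0)
  have happrox : ApproximatesLinearOn (fun x => f x • e) (0 : E →L[ℝ] E) {x | f x = 0} 0 := by
    intro x hx y hy
    rw [mem_ofPred_eq] at hx hy
    simp [hx, hy]
  have h := happrox.norm_fderiv_sub_le μ hs (fun x => (fderiv ℝ f x).smulRight e) fun x _ =>
    ((hf x).hasFDerivAt.smul_const e).hasFDerivWithinAt
  filter_upwards [(ae_restrict_iff' hs).1 h] with x hx hfx
  simpa [he] using hx hfx

end DistancePower

theorem frontier_nonempty_of_isBounded {E : Type*} [NormedAddCommGroup E] [NormedSpace ℝ E]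
    [Nontrivial E] {S : Set E} (hne : S.Nonempty) (hS : IsBounded S) : (frontier S).Nonempty := by
  rw [nonempty_iff_ne_empty, Ne, frontier_eq_empty_iff, not_or]
  refine ⟨hne.ne_empty, ?_⟩
  rintro rfl
  exact NormedSpace.unbounded_univ ℝ E hS

namespace C2Domain

variable {n : ℕ} (D : C2Domain n)

theorem isOpen_carrier : IsOpen D.carrier := by
  rw [D.carrier_eq]
  exact isOpen_lt D.phi_smooth.continuous continuous_const

variable {D} in
theorem phi_eq_zero {x : En n} (hx : x ∈ frontier D.carrier) : D.phi x = 0 := by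
  rw [D.carrier_eq] at hx
  exact frontier_lt_subset_eq D.phi_smooth.continuous continuous_const hx

variable {D} in
theorem fderiv_phi_ne_zero {x : En n} (hx : x ∈ frontier D.carrier) : fderiv ℝ D.phi x ≠ 0 := by
  simpa [gradient] using D.grad_ne x hx

theorem volume_frontier : volume (frontier D.carrier) = 0 := by
  refine measure_eq_zero_iff_ae_notMem.2 ?_
  filter_upwards [ae_fderiv_eq_zero_of_eq_zero (D.phi_smooth.differentiable two_ne_zero)]
    with x hx hfrontier
  exact fderiv_phi_ne_zero hfrontier (hx (phi_eq_zero hfrontier))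

theorem locallyIntegrable_infDist_frontier_rpow_neg {β : ℝ} (hn : 1 ≤ n)
    (hβ : β ∈ Ico (0 : ℝ) 1) :
    LocallyIntegrable (fun x => infDist x (frontier D.carrier) ^ (-β)) := by
  have : NeZero n := ⟨by omega⟩
  refine locallyIntegrable_infDist_rpow_neg isClosed_frontier
    (frontier_nonempty_of_isBounded D.connected.nonempty D.bounded) hβ fun x hx => ?_
  exact ⟨D.phi, fderiv ℝ D.phi x, fderiv_phi_ne_zero hx,
    D.phi_smooth.contDiffAt.hasStrictFDerivAt two_ne_zero, fun y hy => phi_eq_zero hy⟩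

end C2Domain

theorem StarCond.exists_norm_hess_le_div_infDist {n : ℕ} {s : ℝ} {Ω : Set (En n)} {u : En n → ℝ}
    (h : StarCond n s Ω u) (hbdd : IsBounded Ω) :
    ∃ A, ∀ x ∈ Ω, ‖hess n u x‖ ≤ A / infDist x (frontier Ω) := by
  obtain ⟨C, hC, γ, hγ, hC'⟩ := h
  obtain ⟨B, hB⟩ := hbdd.isCompact_closure.bddAbove_image
    (continuous_infDist_pt (frontier Ω)).continuousOn
  refine ⟨C * B ^ γ, fun x hx => (hC' x hx).1.trans ?_⟩
  have hxB : infDist x (frontier Ω) ≤ B := hB (mem_image_of_mem _ (subset_closure hx))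
  rw [rpow_sub_one' infDist_nonneg (by linarith [hγ.2]), mul_div_assoc]
  have := hγ.1.le
  have := infDist_nonneg (x := x) (s := frontier Ω)
  gcongr

section ExtensionByZero

theorem eventuallyEq_zero_of_notMem_frontier {X : Type*} [TopologicalSpace X] {Ω : Set X}
    {u : X → ℝ} {x : X} (hzero : ∀ y ∉ Ω, u y = 0) (hx : x ∉ Ω) (hxf : x ∉ frontier Ω) :
    u =ᶠ[𝓝 x] 0 := by
  have hxc : x ∉ closure Ω := fun h => hxf ⟨h, fun hi => hx (interior_subset hi)⟩
  filter_upwards [isClosed_closure.isOpen_compl.mem_nhds hxc] with y hy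
  exact hzero y fun h => hy (subset_closure h)

variable {E : Type*} [NormedAddCommGroup E] [NormedSpace ℝ E] {Ω : Set E} {u : E → ℝ} {x : E}

theorem contDiffAt_of_notMem_frontier {k : WithTop ℕ∞} (hΩ : IsOpen Ω) (hu : ContDiffOn ℝ k u Ω)
    (hzero : ∀ y ∉ Ω, u y = 0) (hxf : x ∉ frontier Ω) : ContDiffAt ℝ k u x := by
  by_cases hx : x ∈ Ω
  · exact hu.contDiffAt (hΩ.mem_nhds hx)
  · exact contDiffAt_const.congr_of_eventuallyEq (eventuallyEq_zero_of_notMem_frontier hzero hx hxf)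

theorem norm_hessian_le_div_infDist_of_notMem_frontier {A : ℝ}
    (hA : ∀ y ∈ Ω, ‖fderiv ℝ (fderiv ℝ u) y‖ ≤ A / infDist y (frontier Ω))
    (hzero : ∀ y ∉ Ω, u y = 0) (hxf : x ∉ frontier Ω) :
    ‖fderiv ℝ (fderiv ℝ u) x‖ ≤ max A 0 / infDist x (frontier Ω) := by
  have := infDist_nonneg (x := x) (s := frontier Ω)
  by_cases hx : x ∈ Ω
  · refine (hA x hx).trans ?_
    gcongr
    exact le_max_left A 0
  · have hessian_eq : fderiv ℝ (fderiv ℝ u) x = 0 := by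
      rw [(eventuallyEq_zero_of_notMem_frontier hzero hx hxf).fderiv.fderiv_eq, fderiv_zero]
      exact fderiv_const_apply 0
    rw [hessian_eq, ContinuousLinearMap.opNorm_zero]
    positivity

variable [Nontrivial E] [FiniteDimensional ℝ E] [MeasurableSpace E] [BorelSpace E] {μ : Measure E}
  [μ.IsAddHaarMeasure] {α β A : ℝ} {L : ℝ≥0}

theorem secondDiffLocIntegrable_of_norm_hessian_le_of_isBounded
    (hα : Module.finrank ℝ E < α) (hαβ : α < Module.finrank ℝ E + (1 + β))
    (hβ : β ∈ Icc (0 : ℝ) 1) (hΩ : IsOpen Ω) (hne : Ω.Nonempty) (hb : IsBounded Ω)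
    (hnull : μ (frontier Ω) = 0)
    (hdist : LocallyIntegrable (fun x => infDist x (frontier Ω) ^ (-β)) μ)
    (hC2 : ContDiffOn ℝ 2 u Ω) (hu : LipschitzWith L u) (hzero : ∀ x ∉ Ω, u x = 0)
    (hA : ∀ x ∈ Ω, ‖fderiv ℝ (fderiv ℝ u) x‖ ≤ A / infDist x (frontier Ω)) :
    SecondDiffLocIntegrable μ α u := by
  have huc : HasCompactSupport u :=
    .intro hb.isCompact_closure fun x hx => hzero x fun h => hx (subset_closure h)
  exact secondDiffLocIntegrable_of_norm_hessian_le Module.finrank_pos hα hαβ hβ hu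
    (huc.exists_bound_of_continuous hu.continuous) isClosed_frontier
    (frontier_nonempty_of_isBounded hne hb) hnull hdist
    (fun x hx => contDiffAt_of_notMem_frontier hΩ hC2 hzero hx)
    (fun x hx => norm_hessian_le_div_infDist_of_notMem_frontier hA hzero hx)

end ExtensionByZero

section Euclidean

variable {n : ℕ} {s : ℝ} {Ω : Set (En n)} {u : En n → ℝ}

theorem fracLap_eq_mul_fracLapIntegral (x : En n) :
    fracLap n s u x = cK n s / 2 * fracLapIntegral volume (n + 2 * s) u x :=
  rfl

theorem setIntegral_mul_fracLap (hzero : ∀ x ∉ Ω, u x = 0) (huc : HasCompactSupport u)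
    (hu : Continuous u) (hK : SecondDiffLocIntegrable volume (n + 2 * s) u) :
    ∫ x in Ω, u x * fracLap n s u x = cK n s / 2 * gagliardoForm volume (n + 2 * s) u u := by
  rw [setIntegral_eq_integral_of_forall_compl_eq_zero fun x hx => by rw [hzero x hx, zero_mul]]
  simp_rw [fracLap_eq_mul_fracLapIntegral, mul_left_comm _ (cK n s / 2)]
  rw [integral_const_mul, hK.integral_mul_fracLapIntegral hu huc hu]

theorem setIntegral_inner_gradient_mul_fracLap {L : ℝ≥0} (hzero : ∀ x ∉ Ω, u x = 0)
    (hnull : volume (frontier Ω) = 0) (huc : HasCompactSupport u) (hu : LipschitzWith L u)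
    (hK : SecondDiffLocIntegrable volume (n + 2 * s) u) :
    ∫ x in Ω, ⟪x, gradient u x⟫ * fracLap n s u x =
      (2 * s - n) / 2 * (cK n s / 2 * gagliardoForm volume (n + 2 * s) u u) := by
  have inner_eq (x : En n) : ⟪x, gradient u x⟫ = fderiv ℝ u x x := by
    rw [real_inner_comm, inner_gradient_left]
  have fderiv_eq_zero : ∀ᵐ x : En n, x ∉ Ω → fderiv ℝ u x = 0 := by
    filter_upwards [measure_eq_zero_iff_ae_notMem.1 hnull] with x hxf hx
    rw [(eventuallyEq_zero_of_notMem_frontier hzero hx hxf).fderiv_eq, fderiv_zero, Pi.zero_apply]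
  rw [setIntegral_eq_integral_of_ae_compl_eq_zero (by
    filter_upwards [fderiv_eq_zero] with x hx hxΩ
    rw [inner_eq, hx hxΩ, zero_apply, zero_mul])]
  simp_rw [inner_eq, fracLap_eq_mul_fracLapIntegral, mul_left_comm _ (cK n s / 2)]
  have h := two_mul_integral_fderiv_self_mul_fracLapIntegral hu huc hK
  rw [finrank_euclideanSpace_fin] at h
  rw [integral_const_mul]
  linear_combination cK n s / 4 * h

theorem seminormSsq_eq_mul_gagliardoForm (huc : HasCompactSupport u) (hu : Continuous u)
    (hK : SecondDiffLocIntegrable volume (n + 2 * s) u) :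
    seminormSsq n s u = cK n s / 2 * gagliardoForm volume (n + 2 * s) u u := by
  rw [gagliardoForm_self_eq_integral_prod hu huc (hK.integrable_gagliardoForm hu huc hu)]
  rfl

theorem pohozaev_nonlocal_part_general {β A : ℝ} {L : ℝ≥0} (hn : 1 ≤ n) (hs : 0 < s)
    (hβ : β ∈ Icc (0 : ℝ) 1) (hsβ : 2 * s < 1 + β) (hΩ : IsOpen Ω) (hne : Ω.Nonempty)
    (hb : IsBounded Ω) (hnull : volume (frontier Ω) = 0)
    (hdist : LocallyIntegrable fun x => infDist x (frontier Ω) ^ (-β))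
    (hC2 : ContDiffOn ℝ 2 u Ω) (hu : LipschitzWith L u) (hzero : ∀ x ∉ Ω, u x = 0)
    (hA : ∀ x ∈ Ω, ‖hess n u x‖ ≤ A / infDist x (frontier Ω)) :
    ∫ x in Ω, ⟪x, gradient u x⟫ * fracLap n s u x =
        (2 * s - n) / 2 * ∫ x in Ω, u x * fracLap n s u x ∧
      ∫ x in Ω, u x * fracLap n s u x = seminormSsq n s u := by
  have : NeZero n := ⟨by omega⟩
  have huc : HasCompactSupport u :=
    .intro hb.isCompact_closure fun x hx => hzero x fun h => hx (subset_closure h)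
  have hK : SecondDiffLocIntegrable volume (n + 2 * s) u :=
    secondDiffLocIntegrable_of_norm_hessian_le_of_isBounded (β := β) (by simpa) (by simpa) hβ hΩ hne
      hb hnull hdist hC2 hu hzero hA
  rw [setIntegral_mul_fracLap hzero huc hu.continuous hK]
  exact ⟨setIntegral_inner_gradient_mul_fracLap hzero hnull huc hu hK,
    (seminormSsq_eq_mul_gagliardoForm huc hu.continuous hK).symm⟩

end Euclidean

/-- identity (2.6) of Theorem 2.4: in a bounded C² domain strictly
star-shaped with respect to the origin, under condition (★),
`∫_Ω (x·∇u)(-Δ)ˢu dx = ((2s-n)/2)∫_Ω u(-Δ)ˢu dx = ((2s-n)/2)[u]_s²`. -/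
theorem pohozaev_nonlocal_part (n : ℕ) (hn : 1 ≤ n) (s : ℝ) (hs : s ∈ Set.Ioo (0:ℝ) 1)
    (D : C2Domain n) (hD : D.StrictlyStarShapedAt 0)
    (u : En n → ℝ)
    (hu2 : ContDiffOn ℝ 2 u D.carrier)
    (hu1 : ContDiffOn ℝ 1 u (closure D.carrier))
    (hlip : ∃ L : ℝ≥0, LipschitzWith L u)
    (hzero : ∀ x ∉ D.carrier, u x = 0)
    (hstar : StarCond n s D.carrier u) :
    (∫ x in D.carrier, ⟪x, gradient u x⟫ * fracLap n s u x)
      = (2 * s - n) / 2 * ∫ x in D.carrier, u x * fracLap n s u x ∧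
    (2 * s - n) / 2 * (∫ x in D.carrier, u x * fracLap n s u x)
      = (2 * s - n) / 2 * seminormSsq n s u := by
  obtain ⟨L, hL⟩ := hlip
  obtain ⟨A, hA⟩ := hstar.exists_norm_hess_le_div_infDist D.bounded
  have h := pohozaev_nonlocal_part_general hn hs.1 (Ioo_subset_Icc_self hs) (by linarith [hs.2])
    D.isOpen_carrier D.connected.nonempty D.bounded D.volume_frontier
    (D.locallyIntegrable_infDist_frontier_rpow_neg hn (Ioo_subset_Ico_self hs)) hu2 hL hzero hA
  exact ⟨h.1, congrArg _ h.2⟩
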